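/- Let (q1,p1,q2,p2) be a rational solution of A5^(2)(α0,α1,α2,α3), let H be its Hamiltonian, and let c ∈ ℂ with c ≠ 0. Then there exists an integer n such that the function t ↦ H(t) − (n·c/4)/(t−c) has no pole at c; that is, H has at most a simple pole at c and its residue there is an integer multiple of c/4. -/

import Mathlib

open Filter Topology Polynomial

/-- Evaluation of a rational function with complex coefficients at a point,
using its reduced numerator and denominator. -/
noncomputable def evR (f : RatFunc ℂ) (t : ℂ) : ℂ := f.num.eval t / f.denom.eval t

/-- A rational function has no pole at `c` if its reduced denominator does not vanish at `c`. -/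
def NoPoleAt (f : RatFunc ℂ) (c : ℂ) : Prop := f.denom.eval c ≠ 0

/-- `(q1, p1, q2, p2)` is a rational solution of the Sasano system
`A5^(2)(α0, α1, α2, α3)` (the parameter `α2` does not occur in the equations):
the four differential equations hold at every point `t ∈ ℂ` which is not a pole
of any of `q1, p1, q2, p2`. -/
def IsSasanoSol (a0 a1 a3 : ℂ) (q1 p1 q2 p2 : RatFunc ℂ) : Prop :=
  ∀ t : ℂ, NoPoleAt q1 t → NoPoleAt p1 t → NoPoleAt q2 t → NoPoleAt p2 t →
    (t * deriv (evR q1) t =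
      2 * (evR q1 t) ^ 2 * evR p1 t - (evR q1 t) ^ 2 + (a0 + a1 + a3) * evR q1 t
        - t + 4 * t * evR p2 t + 2 * evR q1 t * evR q2 t * evR p2 t) ∧
    (t * deriv (evR p1) t =
      -2 * evR q1 t * (evR p1 t) ^ 2 + 2 * evR q1 t * evR p1 t
        - (a0 + a1 + a3) * evR p1 t + a0 - 2 * evR p1 t * evR q2 t * evR p2 t) ∧
    (t * deriv (evR q2) t =
      2 * (evR q2 t) ^ 2 * evR p2 t - (evR q2 t) ^ 2 + (a0 + a1 + a3) * evR q2 t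
        - t + 4 * t * evR p1 t + 2 * evR q1 t * evR p1 t * evR q2 t) ∧
    (t * deriv (evR p2) t =
      -2 * evR q2 t * (evR p2 t) ^ 2 + 2 * evR q2 t * evR p2 t
        - (a0 + a1 + a3) * evR p2 t + a1 - 2 * evR q1 t * evR p1 t * evR p2 t)

/-- The Hamiltonian of a solution of the Sasano system, as a rational function. -/
noncomputable def sasanoH (a0 a1 a3 : ℂ) (q1 p1 q2 p2 : RatFunc ℂ) : RatFunc ℂ :=
  q1 ^ 2 * p1 ^ 2 - q1 ^ 2 * p1 + RatFunc.C (a0 + a1 + a3) * q1 * p1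
    - RatFunc.C a0 * q1 - RatFunc.X * p1
  + q2 ^ 2 * p2 ^ 2 - q2 ^ 2 * p2 + RatFunc.C (a0 + a1 + a3) * q2 * p2
    - RatFunc.C a1 * q2 - RatFunc.X * p2
  + 4 * RatFunc.X * p1 * p2 + 2 * q1 * p1 * q2 * p2

/-!
Along a solution `dH/dt = 4 p1 p2 - p1 - p2`. Where `p1` and `p2` are regular this makes `H`
regular. At a pole `c ≠ 0` of `p1` or `p2`, balancing orders in the equations bounds the poles of
`q1, q2` by one and those of `p1, p2` by two, and comparing the first three coefficients in each
equation shows that `4 p1 p2 - p1 - p2` is `-(n c / 4) (t - c)⁻²` up to a simple pole, with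
`n ∈ {0, 1, 2, 4}`. As a derivative has no residue, its antiderivative `H` has principal part
`(n c / 4) (t - c)⁻¹`.
-/

open scoped LaurentSeries PowerSeries

section LaurentDerivative

variable {R : Type*} [CommRing R]

local notation "𝒟" => LaurentSeries.derivative R

lemma coeff_laurentDeriv (f : R⸨X⸩) (n : ℤ) :
    (𝒟 f).coeff n = (n + 1) * f.coeff (n + 1) := by
  simp [LaurentSeries.derivative_apply, LaurentSeries.hasseDeriv_coeff]

lemma laurentCoeff_ofNat_mul (a : ℕ) [a.AtLeastTwo] (f : R⸨X⸩) (n : ℤ) :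
    (OfNat.ofNat a * f).coeff n = OfNat.ofNat a * f.coeff n := by
  rw [← Nat.cast_ofNat, ← nsmul_eq_mul, HahnSeries.coeff_nsmul, Pi.smul_apply, nsmul_eq_mul,
    Nat.cast_ofNat]

lemma coeff_X_mul_laurentDeriv (f : R⸨X⸩) (n : ℤ) :
    (HahnSeries.single 1 1 * 𝒟 f).coeff n = n * f.coeff n := by
  simp [HahnSeries.coeff_single_mul]

lemma X_mul_laurentDeriv_mul (f g : R⸨X⸩) :
    HahnSeries.single 1 1 * 𝒟 (f * g) =
      f * (HahnSeries.single 1 1 * 𝒟 g) + HahnSeries.single 1 1 * 𝒟 f * g := by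
  have support_subset (h : R⸨X⸩) : (HahnSeries.single 1 1 * 𝒟 h).support ⊆ h.support := by
    intro n hn hcoeff
    exact hn (by rw [coeff_X_mul_laurentDeriv, hcoeff, mul_zero])
  ext n
  rw [coeff_X_mul_laurentDeriv, HahnSeries.coeff_add, HahnSeries.coeff_mul,
    HahnSeries.coeff_mul_right' g.isPWO_support (support_subset g),
    HahnSeries.coeff_mul_left' f.isPWO_support (support_subset f), Finset.mul_sum,
    ← Finset.sum_add_distrib]
  refine Finset.sum_congr rfl fun ij hij => ?_
  have hn : (ij.1 : R) + ij.2 = n := by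
    exact_mod_cast congrArg (Int.cast (R := R)) (Finset.mem_antidiagonal.mp hij).2.2
  rw [coeff_X_mul_laurentDeriv, coeff_X_mul_laurentDeriv, ← hn]
  ring

lemma laurentDeriv_mul (f g : R⸨X⸩) : 𝒟 (f * g) = f * 𝒟 g + 𝒟 f * g := by
  have hX : (HahnSeries.single (-1) 1 : R⸨X⸩) * HahnSeries.single 1 1 = 1 := by
    rw [HahnSeries.single_mul_single, neg_add_cancel, one_mul, HahnSeries.single_zero_one]
  linear_combination HahnSeries.single (-1) 1 * X_mul_laurentDeriv_mul f g +
    (f * 𝒟 g + 𝒟 f * g - 𝒟 (f * g)) * hX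

lemma laurentDeriv_single (n : ℤ) (a : R) :
    𝒟 (HahnSeries.single n a) = HahnSeries.single (n - 1) (n * a) := by
  simp [LaurentSeries.derivative_apply]

lemma laurentDeriv_C (a : R) : 𝒟 (HahnSeries.C a) = 0 := by
  simp [LaurentSeries.derivative_apply, HahnSeries.C_apply]

lemma laurentDeriv_ofNat (a : ℕ) [a.AtLeastTwo] : 𝒟 (OfNat.ofNat a : R⸨X⸩) = 0 := by
  rw [← map_ofNat HahnSeries.C a, laurentDeriv_C]

lemma laurentDeriv_coe (F : R⟦X⟧) :
    𝒟 (F : R⸨X⸩) = ((PowerSeries.derivative R F : R⟦X⟧) : R⸨X⸩) := by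
  ext n
  rw [coeff_laurentDeriv]
  obtain hn | hn := lt_or_ge n 0
  · obtain rfl | hn' := eq_or_ne n (-1)
    · simp [PowerSeries.coeff_coe]
    · rw [PowerSeries.coeff_coe, PowerSeries.coeff_coe, if_pos hn, if_pos (by omega), mul_zero]
  · lift n to ℕ using hn
    rw [LaurentSeries.coeff_coe_powerSeries, PowerSeries.coeff_derivative, mul_comm,
      ← LaurentSeries.coeff_coe_powerSeries]
    push_cast
    rfl

end LaurentDerivative

section PoleOrder

variable {R : Type*} [CommRing R]

local notation "𝒟" => LaurentSeries.derivative R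

variable {f g : R⸨X⸩} {m n : ℤ}

/-- The group of Laurent series having at most a pole of order `n`; for `n ≤ 0` these are the
series vanishing to order at least `-n`. -/
def polesLE (R : Type*) [CommRing R] (n : ℤ) : AddSubgroup R⸨X⸩ where
  carrier := {f | ∀ m < -n, f.coeff m = 0}
  add_mem' hf hg m hm := by simp [hf m hm, hg m hm]
  zero_mem' _ _ := HahnSeries.coeff_zero
  neg_mem' hf m hm := by simp [hf m hm]

lemma polesLE_mono (h : m ≤ n) (hf : f ∈ polesLE R m) : f ∈ polesLE R n :=
  fun l hl => hf l (by omega)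

lemma C_mem_polesLE_zero (a : R) : HahnSeries.C a ∈ polesLE R 0 :=
  fun _ hl => HahnSeries.coeff_single_of_ne (by omega)

lemma one_mem_polesLE_zero : (1 : R⸨X⸩) ∈ polesLE R 0 := by
  simpa using C_mem_polesLE_zero (1 : R)

lemma coe_mem_polesLE_zero (F : R⟦X⟧) : (F : R⸨X⸩) ∈ polesLE R 0 := by
  intro m hm
  rw [PowerSeries.coeff_coe, if_pos (by omega)]

lemma exists_eq_single_mul_coe (hf : f ∈ polesLE R n) :
    ∃ F : R⟦X⟧, f = HahnSeries.single (-n) 1 * (F : R⸨X⸩) ∧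
      ∀ i : ℕ, PowerSeries.coeff i F = f.coeff (i - n) := by
  refine ⟨PowerSeries.mk fun i => f.coeff (i - n), ?_, fun i => PowerSeries.coeff_mk _ _⟩
  ext m
  rw [HahnSeries.coeff_single_mul, one_mul, PowerSeries.coeff_coe]
  split_ifs with hm
  · exact hf m (by omega)
  · rw [PowerSeries.coeff_mk]
    congr 1
    omega

lemma mul_mem_polesLE (hf : f ∈ polesLE R m) (hg : g ∈ polesLE R n) :
    f * g ∈ polesLE R (m + n) := by
  obtain ⟨F, rfl, -⟩ := exists_eq_single_mul_coe hf
  obtain ⟨G, rfl, -⟩ := exists_eq_single_mul_coe hg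
  rw [mul_mul_mul_comm, HahnSeries.single_mul_single, one_mul, ← PowerSeries.coe_mul]
  intro i hi
  rw [HahnSeries.coeff_single_mul, one_mul, coe_mem_polesLE_zero]
  omega

lemma coeff_mul_of_mem_polesLE (hf : f ∈ polesLE R m) (hg : g ∈ polesLE R n) (l : ℕ) :
    (f * g).coeff (l - (m + n)) =
      ∑ ij ∈ Finset.HasAntidiagonal.antidiagonal l, f.coeff (ij.1 - m) * g.coeff (ij.2 - n) := by
  obtain ⟨F, hF, hFcoeff⟩ := exists_eq_single_mul_coe hf
  obtain ⟨G, hG, hGcoeff⟩ := exists_eq_single_mul_coe hg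
  have hfg : f * g = HahnSeries.single (-(m + n)) 1 * ((F * G : R⟦X⟧) : R⸨X⸩) := by
    rw [hF, hG, mul_mul_mul_comm, HahnSeries.single_mul_single, one_mul, neg_add,
      PowerSeries.coe_mul]
  simp_rw [← hFcoeff, ← hGcoeff]
  rw [hfg, HahnSeries.coeff_single_mul, one_mul, sub_neg_eq_add, sub_add_cancel,
    LaurentSeries.coeff_coe_powerSeries, PowerSeries.coeff_mul]

lemma mem_polesLE_iff_le_order (hf : f ≠ 0) : f ∈ polesLE R n ↔ -n ≤ f.order := by
  refine ⟨fun h => ?_, fun h m hm => HahnSeries.coeff_eq_zero_of_lt_order (by omega)⟩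
  by_contra! hlt
  exact HahnSeries.coeff_order_eq_zero.not.mpr hf (h _ hlt)

lemma ne_zero_of_notMem_polesLE (hf : f ∉ polesLE R n) : f ≠ 0 := by
  rintro rfl
  exact hf (zero_mem _)

lemma exists_pole_order (hf : f ∉ polesLE R n) :
    ∃ m > n, f ∈ polesLE R m ∧ f ∉ polesLE R (m - 1) := by
  have hf0 := ne_zero_of_notMem_polesLE hf
  rw [mem_polesLE_iff_le_order hf0] at hf
  refine ⟨-f.order, by omega, ?_, ?_⟩ <;> rw [mem_polesLE_iff_le_order hf0] <;> omega

lemma mem_polesLE_of_mul_mem [NoZeroDivisors R] (hf : f ∉ polesLE R (m - 1))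
    (hfg : f * g ∈ polesLE R n) : g ∈ polesLE R (n - m) := by
  obtain rfl | hg := eq_or_ne g 0
  · exact zero_mem _
  have hf0 := ne_zero_of_notMem_polesLE hf
  rw [mem_polesLE_iff_le_order (mul_ne_zero hf0 hg), HahnSeries.order_mul hf0 hg] at hfg
  rw [mem_polesLE_iff_le_order hf0] at hf
  rw [mem_polesLE_iff_le_order hg]
  omega

lemma laurentDeriv_mem_polesLE (hf : f ∈ polesLE R n) : 𝒟 f ∈ polesLE R (n + 1) := by
  intro m hm
  rw [coeff_laurentDeriv, hf _ (by omega), mul_zero]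

lemma laurentDeriv_mem_polesLE_zero (hf : f ∈ polesLE R 0) : 𝒟 f ∈ polesLE R 0 := by
  intro m hm
  obtain rfl | hne := eq_or_ne m (-1)
  · simp
  · rw [coeff_laurentDeriv, hf _ (by omega), mul_zero]

variable [NoZeroDivisors R] [CharZero R]

lemma ofNat_mul_mem_polesLE_iff (a : ℕ) [a.AtLeastTwo] :
    (OfNat.ofNat a : R⸨X⸩) * f ∈ polesLE R n ↔ f ∈ polesLE R n := by
  refine ⟨fun h m hm => ?_, fun h m hm => by rw [laurentCoeff_ofNat_mul, h m hm, mul_zero]⟩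
  have hcoeff := h m hm
  rw [laurentCoeff_ofNat_mul] at hcoeff
  exact (mul_eq_zero.mp hcoeff).resolve_left (OfNat.ofNat_ne_zero a)

lemma mem_polesLE_zero_of_laurentDeriv_mem (hf : 𝒟 f ∈ polesLE R 1) : f ∈ polesLE R 0 := by
  intro m hm
  have hcoeff := hf (m - 1) (by omega)
  rw [coeff_laurentDeriv, sub_add_cancel, Int.cast_sub, Int.cast_one, sub_add_cancel] at hcoeff
  exact (mul_eq_zero.mp hcoeff).resolve_left (by exact_mod_cast hm.ne)

end PoleOrder

section LocalTime

variable {k : Type*} [Field k]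

local notation "𝒟" => LaurentSeries.derivative k

/-- The independent variable `t = s + c`, expanded in the local parameter `s` at `c`. -/
noncomputable def localTime (c : k) : k⸨X⸩ := HahnSeries.single 1 1 + HahnSeries.C c

variable {c : k} {f : k⸨X⸩} {n : ℤ}

lemma coeff_localTime_mul (c : k) (f : k⸨X⸩) (n : ℤ) :
    (localTime c * f).coeff n = f.coeff (n - 1) + c * f.coeff n := by
  simp [localTime, add_mul, HahnSeries.coeff_single_mul]

lemma coeff_localTime_mul_laurentDeriv (c : k) (f : k⸨X⸩) (n : ℤ) :
    (localTime c * 𝒟 f).coeff n = n * f.coeff n + c * ((n + 1) * f.coeff (n + 1)) := by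
  rw [coeff_localTime_mul, coeff_laurentDeriv, coeff_laurentDeriv, sub_add_cancel]
  simp

lemma laurentDeriv_localTime (c : k) : 𝒟 (localTime c) = 1 := by
  rw [localTime, map_add, laurentDeriv_single, laurentDeriv_C]
  simp

lemma localTime_mul_mem_polesLE (c : k) (hf : f ∈ polesLE k n) :
    localTime c * f ∈ polesLE k n := by
  intro m hm
  rw [coeff_localTime_mul, hf _ (by omega), hf _ hm, mul_zero, add_zero]

lemma localTime_notMem_polesLE_neg_one (hc : c ≠ 0) : localTime c ∉ polesLE k (-1) := by
  intro h
  have hcoeff := h 0 (by norm_num)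
  simp [localTime, hc] at hcoeff

lemma mem_polesLE_of_localTime_mul_mem (hc : c ≠ 0) (hf : localTime c * f ∈ polesLE k n) :
    f ∈ polesLE k n := by
  simpa using mem_polesLE_of_mul_mem (m := 0) (localTime_notMem_polesLE_neg_one hc) hf

lemma localTime_mem_polesLE_zero (c : k) : localTime c ∈ polesLE k 0 := by
  simpa using localTime_mul_mem_polesLE c one_mem_polesLE_zero

end LocalTime

section LocalODE

variable {k : Type*} [Field k]

local notation "𝒟" => LaurentSeries.derivative k

variable {a c : k} {p q w h : k⸨X⸩} {m : ℤ}

lemma mem_polesLE_one_of_log_deriv (hp : p ∉ polesLE k 0)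
    (hode : localTime c * 𝒟 p = -(p * w) + HahnSeries.C a) : w ∈ polesLE k 1 := by
  obtain ⟨m, hm, hpm, hpm'⟩ := exists_pole_order hp
  have hpw : p * w ∈ polesLE k (m + 1) := by
    rw [show p * w = HahnSeries.C a - localTime c * 𝒟 p by linear_combination hode]
    exact sub_mem (polesLE_mono (by omega) (C_mem_polesLE_zero a))
      (localTime_mul_mem_polesLE c (laurentDeriv_mem_polesLE hpm))
  simpa using mem_polesLE_of_mul_mem hpm' hpw

lemma mem_polesLE_zero_of_log_deriv (hp : p ∈ polesLE k 0) (hp' : p ∉ polesLE k (-1))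
    (hode : localTime c * 𝒟 p = -(p * w) + HahnSeries.C a) : w ∈ polesLE k 0 := by
  have hpw : p * w ∈ polesLE k 0 := by
    rw [show p * w = HahnSeries.C a - localTime c * 𝒟 p by linear_combination hode]
    exact sub_mem (C_mem_polesLE_zero a)
      (localTime_mul_mem_polesLE c (laurentDeriv_mem_polesLE_zero hp))
  simpa using mem_polesLE_of_mul_mem (m := 0) hp' hpw

lemma mem_polesLE_of_riccati (hm : 1 ≤ m) (hw : w ∈ polesLE k 1) (hh : h ∈ polesLE k (2 * m + 1))
    (hode : localTime c * 𝒟 q = q ^ 2 + w * q + h) : q ∈ polesLE k m := by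
  by_contra hq
  obtain ⟨l, hl, hql, hql'⟩ := exists_pole_order hq
  have hsq : q * q ∈ polesLE k (m + l) := by
    rw [show q * q = localTime c * 𝒟 q - w * q - h by linear_combination -hode]
    refine sub_mem (sub_mem ?_ ?_) (polesLE_mono (by omega) hh)
    · exact polesLE_mono (by omega) (localTime_mul_mem_polesLE c (laurentDeriv_mem_polesLE hql))
    · exact polesLE_mono (by omega) (mul_mem_polesLE hw hql)
  exact hq (by simpa using mem_polesLE_of_mul_mem hql' hsq)

end LocalODE

section Jet

variable {k : Type*} [Field k] {c : k} {x a y b w : ℕ → k}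

/-- The leading coefficient equations of the pair `(q1, p1)`, multiplied by `-1` where convenient.
In the local parameter at `c` write `q1 = ∑ x i s^(i-1)`, `p1 = ∑ a i s^(i-2)`,
`p2 = ∑ b i s^(i-2)` and `u = 2 (q1 p1 + q2 p2) + A = ∑ w i s^(i-1)`. The fields compare the
coefficients of `s^-2, s^-1, s^0` in the equation of `q1` and of `s^-3, s^-2, s^-1` in the equation
of `p1`. -/
structure IsHalfJet (c : k) (x a b w : ℕ → k) : Prop where
  q_zero : -(c * x 0) = -x 0 ^ 2 + w 0 * x 0 + 4 * c * b 0
  q_one : -x 0 = -(2 * x 0 * x 1) + (w 0 * x 1 + w 1 * x 0) + (4 * c * b 1 + 4 * b 0)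
  q_two : c * x 2 = -(2 * x 0 * x 2 + x 1 ^ 2) + (w 0 * x 2 + w 1 * x 1 + w 2 * x 0) - c
    + (4 * c * b 2 + 4 * b 1)
  p_zero : 2 * c * a 0 = a 0 * (w 0 - 2 * x 0)
  p_one : c * a 1 + 2 * a 0 = a 0 * (w 1 - 2 * x 1) + a 1 * (w 0 - 2 * x 0)
  p_two : a 1 = a 0 * (w 2 - 2 * x 2) + a 1 * (w 1 - 2 * x 1) + a 2 * (w 0 - 2 * x 0)

/-- The leading coefficients of a Laurent solution of the Sasano system: `IsHalfJet` for both
pairs, with `q2 = ∑ y i s^(i-1)`, and the coefficients of `s^-3, s^-2, s^-1` in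
`u = 2 (q1 p1 + q2 p2) + A`. -/
structure IsSasanoJet (c : k) (x a y b w : ℕ → k) : Prop where
  left : IsHalfJet c x a b w
  right : IsHalfJet c y b a w
  w_zero : x 0 * a 0 + y 0 * b 0 = 0
  w_one : x 0 * a 1 + x 1 * a 0 + (y 0 * b 1 + y 1 * b 0) = 0
  w_two : w 0 = 2 * (x 0 * a 2 + x 1 * a 1 + x 2 * a 0 + (y 0 * b 2 + y 1 * b 1 + y 2 * b 0))

/-- For `p1 = ∑ a i s^(i-2)` and `p2 = ∑ b i s^(i-2)`, the polar part of `4 p1 p2 - p1 - p2` up to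
order two is `-(n c / 4) s^-2` with `n` an integer. -/
def HasQuantizedResidue (c : k) (a b : ℕ → k) : Prop :=
  a 0 * b 0 = 0 ∧ a 0 * b 1 + a 1 * b 0 = 0 ∧
    ∃ n : ℤ, 16 * (a 0 * b 2 + a 1 * b 1 + a 2 * b 0) - 4 * (a 0 + b 0) = -(n * c)

lemma HasQuantizedResidue.symm (h : HasQuantizedResidue c a b) : HasQuantizedResidue c b a := by
  obtain ⟨h0, h1, n, h2⟩ := h
  exact ⟨by linear_combination h0, by linear_combination h1, n, by linear_combination h2⟩

namespace IsSasanoJet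

lemma symm (h : IsSasanoJet c x a y b w) : IsSasanoJet c y b x a w where
  left := h.right
  right := h.left
  w_zero := by linear_combination h.w_zero
  w_one := by linear_combination h.w_one
  w_two := by linear_combination h.w_two

lemma w_zero_eq_of_double (h : IsSasanoJet c x a y b w) (ha : a 0 ≠ 0) :
    w 0 = 2 * x 0 + 2 * c :=
  mul_left_cancel₀ ha (by linear_combination -h.left.p_zero)

lemma w_zero_eq_of_simple (h : IsSasanoJet c x a y b w) (ha : a 0 = 0) (ha' : a 1 ≠ 0) :
    w 0 = 2 * x 0 + c :=
  mul_left_cancel₀ ha' (by linear_combination -h.left.p_one + (2 - w 1 + 2 * x 1) * ha)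

lemma x_zero_eq_zero (h : IsSasanoJet c x a y b w) (ha : a 0 ≠ 0) (hb : b 0 = 0) : x 0 = 0 :=
  (mul_eq_zero.mp (by linear_combination h.w_zero - y 0 * hb)).resolve_right ha

variable [CharZero k]

lemma not_both_double (hc : c ≠ 0) (h : IsSasanoJet c x a y b w) (ha : a 0 ≠ 0) : b 0 = 0 := by
  by_contra hb
  have h4c : 4 * c ≠ 0 := by simpa using hc
  have hw := h.w_zero_eq_of_double ha
  have hxy : x 0 = y 0 :=
    mul_left_cancel₀ (two_ne_zero (α := k))
      (by linear_combination h.symm.w_zero_eq_of_double hb - hw)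
  have hab : a 0 = b 0 := by
    refine mul_left_cancel₀ h4c ?_
    linear_combination h.left.q_zero - h.right.q_zero - (x 0 + y 0 - w 0 - c) * hxy
  have hx : x 0 = 0 := by
    refine (mul_eq_zero.mp ?_).resolve_right (mul_ne_zero two_ne_zero ha)
    linear_combination h.w_zero + x 0 * hab + b 0 * hxy
  refine mul_ne_zero h4c hb ?_
  linear_combination -h.left.q_zero + (x 0 - w 0 - c) * hx

lemma x_one_eq (hc : c ≠ 0) (h : IsSasanoJet c x a y b w) (ha : a 0 ≠ 0) (hb : b 0 = 0) :
    x 1 = -2 * b 1 := by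
  have hx := h.x_zero_eq_zero ha hb
  refine mul_left_cancel₀ (mul_ne_zero two_ne_zero hc) ?_
  linear_combination -h.left.q_one - x 1 * h.w_zero_eq_of_double ha - 4 * hb -
    (w 1 + 1) * hx

lemma b_one_eq_zero (hc : c ≠ 0) (h : IsSasanoJet c x a y b w) (ha : a 0 ≠ 0) (hb : b 0 = 0) :
    b 1 = 0 := by
  by_contra hb'
  have hx := h.x_zero_eq_zero ha hb
  have hw : w 0 = 2 * c := by linear_combination h.w_zero_eq_of_double ha + 2 * hx
  have hy : 2 * y 0 = c := by linear_combination hw - h.symm.w_zero_eq_of_simple hb hb'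
  have ha0 : 4 * a 0 = c := by
    refine mul_left_cancel₀ hb' ?_
    linear_combination -2 * h.w_one + 2 * a 1 * hx + 2 * a 0 * h.x_one_eq hc ha hb +
      2 * y 1 * hb + b 1 * hy
  have hc9 : 9 * c ^ 2 = 0 := by
    linear_combination -4 * h.right.q_zero - 4 * y 0 * hw - 4 * c * ha0 + (2 * y 0 - 5 * c) * hy
  simp [hc] at hc9

lemma hasQuantizedResidue_of_double (hc : c ≠ 0) (h : IsSasanoJet c x a y b w) (ha : a 0 ≠ 0) :
    HasQuantizedResidue c a b := by
  have hb := h.not_both_double hc ha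
  have hb' := h.b_one_eq_zero hc ha hb
  refine ⟨by rw [hb, mul_zero], by rw [hb, hb', mul_zero, mul_zero, add_zero], ?_⟩
  have hx := h.x_zero_eq_zero ha hb
  have hx' : x 1 = 0 := by rw [h.x_one_eq hc ha hb, hb', mul_zero]
  have hw : w 0 = 2 * c := by linear_combination h.w_zero_eq_of_double ha + 2 * hx
  have hx2 : x 2 = 1 - 4 * b 2 := by
    refine mul_left_cancel₀ hc ?_
    linear_combination -h.left.q_two + (2 * x 2 - w 2) * hx + (x 1 - w 1) * hx' - x 2 * hw -
      4 * hb'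
  have hres : x 2 * a 0 + y 0 * b 2 = c := by
    refine mul_left_cancel₀ (two_ne_zero (α := k)) ?_
    linear_combination -h.w_two + hw - 2 * a 2 * hx - 2 * a 1 * hx' - 2 * y 2 * hb - 2 * y 1 * hb'
  have hb2 : b 2 * (c - y 0) = 0 := by
    refine (mul_eq_zero.mp ?_).resolve_left (two_ne_zero (α := k))
    linear_combination -h.right.p_two - b 2 * hw - (w 2 - 2 * y 2) * hb - (w 1 - 2 * y 1 - 1) * hb'
  obtain hb2 | hy := mul_eq_zero.mp hb2
  · refine ⟨4, ?_⟩
    push_cast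
    linear_combination 16 * a 1 * hb' + (16 * a 2 - 4) * hb + 4 * y 0 * hb2 - 4 * hres +
      4 * a 0 * hx2
  · have ha0 : 2 * a 0 = -c := by
      refine mul_left_cancel₀ (mul_ne_zero two_ne_zero hc) ?_
      linear_combination -h.right.q_zero - y 0 * hw + (2 * c - y 0) * hy
    have hb2 : 2 * b 2 = 1 := by
      refine mul_left_cancel₀ (mul_ne_zero three_ne_zero hc) ?_
      linear_combination 2 * hres - x 2 * ha0 + c * hx2 + 2 * b 2 * hy
    refine ⟨2, ?_⟩
    push_cast
    linear_combination 16 * a 1 * hb' + (16 * a 2 - 4) * hb + 8 * a 0 * hb2 + 2 * ha0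

lemma sixteen_mul_eq_of_simple (hc : c ≠ 0) (h : IsSasanoJet c x a y b w) (ha : a 0 = 0)
    (hb : b 0 = 0) (ha' : a 1 ≠ 0) (hb' : b 1 ≠ 0) : 16 * (a 1 * b 1) = -c := by
  have hw := h.w_zero_eq_of_simple ha ha'
  have hy : y 0 = x 0 :=
    mul_left_cancel₀ (two_ne_zero (α := k))
      (by linear_combination hw - h.symm.w_zero_eq_of_simple hb hb')
  have hleft : -x 0 = c * x 1 + w 1 * x 0 + 4 * c * b 1 := by
    linear_combination h.left.q_one + x 1 * hw + 4 * hb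
  have hright : -x 0 = c * y 1 + w 1 * x 0 + 4 * c * a 1 := by
    linear_combination h.right.q_one + y 1 * hw + 4 * ha + (1 - 2 * y 1 + w 1) * hy
  have hx : x 0 * (x 0 + 2 * c) = 0 := by
    linear_combination -h.left.q_zero - x 0 * hw - 4 * c * hb
  obtain hx | hx := mul_eq_zero.mp hx
  · have hx1 : x 1 = -4 * b 1 :=
      mul_left_cancel₀ hc (by linear_combination -hleft - (1 + w 1) * hx)
    have hy1 : y 1 = -4 * a 1 :=
      mul_left_cancel₀ hc (by linear_combination -hright - (1 + w 1) * hx)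
    linear_combination h.w_two - hw + 2 * a 1 * hx1 + 2 * b 1 * hy1 +
      (2 * a 2 + 2 * b 2 - 2) * hx + 2 * b 2 * hy + 2 * x 2 * ha + 2 * y 2 * hb
  · have hab : b 1 = -a 1 := by
      refine mul_left_cancel₀ (mul_ne_zero two_ne_zero hc) ?_
      linear_combination -h.w_one + x 1 * ha + y 1 * hb + b 1 * hy + (a 1 + b 1) * hx
    have hxy : x 1 - y 1 = 8 * a 1 := by
      refine mul_left_cancel₀ hc ?_
      linear_combination hright - hleft - 4 * c * hab
    have hab2 : c * (a 2 + b 2) = 16 * a 1 ^ 2 := by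
      linear_combination -h.left.p_two - h.right.p_two + (1 - w 1 + 2 * y 1) * hab +
        2 * a 1 * hxy - (a 2 + b 2) * hw + 2 * b 2 * hy - (w 2 - 2 * x 2) * ha -
        (w 2 - 2 * y 2) * hb
    refine mul_left_cancel₀ (three_ne_zero (α := k)) ?_
    linear_combination -h.w_two + hw + (2 - 2 * a 2 - 2 * b 2) * hx + 4 * hab2 - 2 * a 1 * hxy +
      (48 * a 1 - 2 * y 1) * hab - 2 * b 2 * hy - 2 * x 2 * ha - 2 * y 2 * hb

theorem hasQuantizedResidue (hc : c ≠ 0) (h : IsSasanoJet c x a y b w) :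
    HasQuantizedResidue c a b := by
  by_cases ha : a 0 = 0
  swap
  · exact h.hasQuantizedResidue_of_double hc ha
  by_cases hb : b 0 = 0
  swap
  · exact (h.symm.hasQuantizedResidue_of_double hc hb).symm
  refine ⟨by rw [ha, zero_mul], by rw [ha, hb, zero_mul, mul_zero, add_zero], ?_⟩
  suffices ∃ n : ℤ, 16 * (a 1 * b 1) = -(n * c) by
    simpa [ha, hb] using this
  by_cases hab : a 1 * b 1 = 0
  · exact ⟨0, by simp [hab]⟩
  · obtain ⟨ha', hb'⟩ := mul_ne_zero_iff.mp hab
    exact ⟨1, by simpa using h.sixteen_mul_eq_of_simple hc ha hb ha' hb'⟩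

end IsSasanoJet
end Jet

/-- Laurent series solutions, at a point `c`, of the Sasano system with parameters `a0`, `a1` and
`A = α0 + α1 + α3`. The series `u` abbreviates the factor `2 (q1 p1 + q2 p2) + A` common to the
four equations. -/
structure IsSasanoExpansion {k : Type*} [Field k] (A a0 a1 c : k) (q1 p1 q2 p2 u : k⸨X⸩) :
    Prop where
  u_eq : u = 2 * (q1 * p1 + q2 * p2) + HahnSeries.C A
  q1_eq : localTime c * LaurentSeries.derivative k q1 =
    -q1 ^ 2 + u * q1 - localTime c + 4 * (localTime c * p2)
  p1_eq : localTime c * LaurentSeries.derivative k p1 = -(p1 * (u - 2 * q1)) + HahnSeries.C a0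
  q2_eq : localTime c * LaurentSeries.derivative k q2 =
    -q2 ^ 2 + u * q2 - localTime c + 4 * (localTime c * p1)
  p2_eq : localTime c * LaurentSeries.derivative k p2 = -(p2 * (u - 2 * q2)) + HahnSeries.C a1

namespace IsSasanoExpansion

variable {k : Type*} [Field k]

local notation "𝒟" => LaurentSeries.derivative k

variable {A a0 a1 c : k} {q1 p1 q2 p2 u : k⸨X⸩} {m : ℤ}

lemma symm (h : IsSasanoExpansion A a0 a1 c q1 p1 q2 p2 u) :
    IsSasanoExpansion A a1 a0 c q2 p2 q1 p1 u where
  u_eq := by rw [h.u_eq, add_comm (q2 * p2)]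
  q1_eq := h.q2_eq
  p1_eq := h.p2_eq
  q2_eq := h.q1_eq
  p2_eq := h.p1_eq

lemma riccati_one (h : IsSasanoExpansion A a0 a1 c q1 p1 q2 p2 u) :
    localTime c * 𝒟 q1 = q1 ^ 2 + (u - 2 * q1) * q1 + localTime c * (4 * p2 - 1) := by
  linear_combination h.q1_eq

lemma riccati_neg_two (h : IsSasanoExpansion A a0 a1 c q1 p1 q2 p2 u) :
    localTime c * 𝒟 (-q2) = (-q2) ^ 2 + u * (-q2) + -(localTime c * (4 * p1 - 1)) := by
  rw [map_neg]
  linear_combination -h.q2_eq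

lemma four_mul_p2_add_q1_sq_mem (h : IsSasanoExpansion A a0 a1 c q1 p1 q2 p2 u) (hm : 0 ≤ m)
    (hw1 : u - 2 * q1 ∈ polesLE k 1) (hq1 : q1 ∈ polesLE k m) :
    4 * (localTime c * p2) + q1 ^ 2 ∈ polesLE k (m + 1) := by
  rw [show 4 * (localTime c * p2) + q1 ^ 2 =
    localTime c * 𝒟 q1 - (u - 2 * q1) * q1 + localTime c by linear_combination -h.q1_eq]
  refine add_mem (sub_mem ?_ ?_) (polesLE_mono (by omega) (localTime_mem_polesLE_zero c))
  · exact localTime_mul_mem_polesLE c (laurentDeriv_mem_polesLE hq1)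
  · exact polesLE_mono (by omega) (mul_mem_polesLE hw1 hq1)

variable [CharZero k]

lemma u_mem_polesLE_one (hw1 : u - 2 * q1 ∈ polesLE k 1) (hq1 : q1 ∈ polesLE k 1) :
    u ∈ polesLE k 1 := by
  simpa using add_mem hw1 ((ofNat_mul_mem_polesLE_iff 2).mpr hq1)

lemma p2_mem_polesLE_two (h : IsSasanoExpansion A a0 a1 c q1 p1 q2 p2 u) (hc : c ≠ 0)
    (hq1 : q1 ∈ polesLE k 1) (hu : u ∈ polesLE k 1) : p2 ∈ polesLE k 2 := by
  have hw1 := sub_mem hu ((ofNat_mul_mem_polesLE_iff 2).mpr hq1)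
  have hdefect := h.four_mul_p2_add_q1_sq_mem (by norm_num) hw1 hq1
  have hsq : q1 ^ 2 ∈ polesLE k (1 + 1) := by
    rw [sq]
    exact mul_mem_polesLE hq1 hq1
  refine mem_polesLE_of_localTime_mul_mem hc ((ofNat_mul_mem_polesLE_iff 4).mp ?_)
  simpa using sub_mem hdefect hsq

lemma q1_mem_polesLE_one_of_both (h : IsSasanoExpansion A a0 a1 c q1 p1 q2 p2 u)
    (hw1 : u - 2 * q1 ∈ polesLE k 1) (hw2 : u - 2 * q2 ∈ polesLE k 1) :
    q1 ∈ polesLE k 1 := by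
  by_contra hq
  obtain ⟨m, hm, hq1, hq1'⟩ := exists_pole_order hq
  have hdiff : q1 - q2 ∈ polesLE k 1 := by
    rw [← ofNat_mul_mem_polesLE_iff 2,
      show (2 : k⸨X⸩) * (q1 - q2) = (u - 2 * q2) - (u - 2 * q1) by ring]
    exact sub_mem hw2 hw1
  have hq2 : q2 ∈ polesLE k m := by
    simpa using sub_mem hq1 (polesLE_mono (by omega) hdiff)
  have hq2' : q2 ∉ polesLE k (m - 1) := fun hq2 =>
    hq1' (by simpa using add_mem (polesLE_mono (by omega) hdiff) hq2)
  have hu : u ∈ polesLE k m := by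
    simpa using add_mem (polesLE_mono (by omega) hw1) ((ofNat_mul_mem_polesLE_iff 2).mpr hq1)
  have hcubic : q1 * (q2 * (q1 + q2)) ∈ polesLE k (2 * m + 1) := by
    rw [show q1 * (q2 * (q1 + q2)) = q1 * (4 * (localTime c * p1) + q2 ^ 2) +
        q2 * (4 * (localTime c * p2) + q1 ^ 2) - 2 * (localTime c * (u - HahnSeries.C A)) by
      linear_combination 2 * localTime c * h.u_eq]
    refine sub_mem (add_mem ?_ ?_) ?_
    · exact polesLE_mono (by omega) (mul_mem_polesLE hq1
        (h.symm.four_mul_p2_add_q1_sq_mem (by omega) hw2 hq2))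
    · exact polesLE_mono (by omega) (mul_mem_polesLE hq2
        (h.four_mul_p2_add_q1_sq_mem (by omega) hw1 hq1))
    · exact (ofNat_mul_mem_polesLE_iff 2).mpr (localTime_mul_mem_polesLE c
        (sub_mem (polesLE_mono (by omega) hu) (polesLE_mono (by omega) (C_mem_polesLE_zero A))))
  have hsum : q1 + q2 ∈ polesLE k 1 := by
    have := mem_polesLE_of_mul_mem hq2' (mem_polesLE_of_mul_mem hq1' hcubic)
    exact polesLE_mono (by omega) this
  refine hq ((ofNat_mul_mem_polesLE_iff 2).mp ?_)
  rw [show (2 : k⸨X⸩) * q1 = (q1 + q2) + (q1 - q2) by ring]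
  exact add_mem hsum hdiff

lemma q1_mem_polesLE_one_of_regular (h : IsSasanoExpansion A a0 a1 c q1 p1 q2 p2 u)
    (hw1 : u - 2 * q1 ∈ polesLE k 1) (hp2 : p2 ∈ polesLE k 0) : q1 ∈ polesLE k 1 := by
  have hforcing : localTime c * (4 * p2 - 1) ∈ polesLE k 0 :=
    localTime_mul_mem_polesLE c
      (sub_mem ((ofNat_mul_mem_polesLE_iff 4).mpr hp2) one_mem_polesLE_zero)
  exact mem_polesLE_of_riccati le_rfl hw1 (polesLE_mono (by norm_num) hforcing) h.riccati_one

lemma q2_mem_polesLE (h : IsSasanoExpansion A a0 a1 c q1 p1 q2 p2 u) (hm : 1 ≤ m)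
    (hu : u ∈ polesLE k 1) (hp1 : p1 ∈ polesLE k (2 * m + 1)) : q2 ∈ polesLE k m := by
  rw [← neg_mem_iff]
  refine mem_polesLE_of_riccati hm hu (neg_mem ?_) h.riccati_neg_two
  exact localTime_mul_mem_polesLE c (sub_mem ((ofNat_mul_mem_polesLE_iff 4).mpr hp1)
    (polesLE_mono (by omega) one_mem_polesLE_zero))

lemma q1_mem_polesLE_neg_two (h : IsSasanoExpansion A a0 a1 c q1 p1 q2 p2 u) (hm : 3 ≤ m)
    (hp1 : p1 ∈ polesLE k m) (hp1' : p1 ∉ polesLE k (m - 1)) (hu : u ∈ polesLE k 1)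
    (hp2 : p2 ∈ polesLE k 0) : q1 ∈ polesLE k (-2) := by
  have hq2 : q2 ∈ polesLE k (m - 2) :=
    h.q2_mem_polesLE (by omega) hu (polesLE_mono (by omega) hp1)
  have hpq : p1 * q1 ∈ polesLE k (m - 2) := by
    rw [← ofNat_mul_mem_polesLE_iff 2,
      show (2 : k⸨X⸩) * (p1 * q1) = u - 2 * (q2 * p2) - HahnSeries.C A by
        linear_combination -h.u_eq]
    refine sub_mem (sub_mem (polesLE_mono (by omega) hu) ?_)
      (polesLE_mono (by omega) (C_mem_polesLE_zero A))
    simpa using (ofNat_mul_mem_polesLE_iff 2).mpr (mul_mem_polesLE hq2 hp2)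
  simpa using mem_polesLE_of_mul_mem hp1' hpq

/-- If the pole of `p1` had order at least three, `q1` would vanish to order two at `c`, forcing
`p2 = 1/4` there; then `q2` has at most a simple pole, and `p1` at most a double one. -/
lemma p1_mem_polesLE_two_of_regular (h : IsSasanoExpansion A a0 a1 c q1 p1 q2 p2 u) (hc : c ≠ 0)
    (hw1 : u - 2 * q1 ∈ polesLE k 1) (hp2 : p2 ∈ polesLE k 0) : p1 ∈ polesLE k 2 := by
  by_contra hp
  obtain ⟨m, hm, hp1, hp1'⟩ := exists_pole_order hp
  have hu := u_mem_polesLE_one hw1 (h.q1_mem_polesLE_one_of_regular hw1 hp2)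
  have hq1 := h.q1_mem_polesLE_neg_two hm hp1 hp1' hu hp2
  have hp2' : 4 * p2 - 1 ∈ polesLE k (-1) := by
    refine mem_polesLE_of_localTime_mul_mem hc ?_
    rw [show localTime c * (4 * p2 - 1) =
      localTime c * 𝒟 q1 - q1 * q1 - (u - 2 * q1) * q1 by linear_combination -h.riccati_one]
    refine sub_mem (sub_mem ?_ ?_) ?_
    · exact localTime_mul_mem_polesLE c (laurentDeriv_mem_polesLE hq1)
    · exact polesLE_mono (by norm_num) (mul_mem_polesLE hq1 hq1)
    · exact mul_mem_polesLE hw1 hq1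
  have hp2_unit : p2 ∉ polesLE k (-1) := fun hmem => by
    have hone := sub_mem ((ofNat_mul_mem_polesLE_iff 4).mpr hmem) hp2' 0 (by norm_num)
    simp at hone
  have hw2 := mem_polesLE_zero_of_log_deriv hp2 hp2_unit h.p2_eq
  have hq2 : q2 ∈ polesLE k 1 := by
    rw [← ofNat_mul_mem_polesLE_iff 2]
    simpa using sub_mem hu (polesLE_mono zero_le_one hw2)
  exact hp (h.symm.p2_mem_polesLE_two hc hq2 hu)

theorem polesLE_of_singular (h : IsSasanoExpansion A a0 a1 c q1 p1 q2 p2 u) (hc : c ≠ 0)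
    (hp1 : p1 ∉ polesLE k 0) :
    q1 ∈ polesLE k 1 ∧ p1 ∈ polesLE k 2 ∧ q2 ∈ polesLE k 1 ∧ p2 ∈ polesLE k 2 ∧
      u ∈ polesLE k 1 := by
  have hw1 := mem_polesLE_one_of_log_deriv hp1 h.p1_eq
  by_cases hp2 : p2 ∈ polesLE k 0
  · have hq1 := h.q1_mem_polesLE_one_of_regular hw1 hp2
    have hu := u_mem_polesLE_one hw1 hq1
    have hp1' := h.p1_mem_polesLE_two_of_regular hc hw1 hp2
    exact ⟨hq1, hp1', h.q2_mem_polesLE le_rfl hu (polesLE_mono (by norm_num) hp1'),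
      polesLE_mono zero_le_two hp2, hu⟩
  · have hw2 := mem_polesLE_one_of_log_deriv hp2 h.p2_eq
    have hq1 := h.q1_mem_polesLE_one_of_both hw1 hw2
    have hq2 := h.symm.q1_mem_polesLE_one_of_both hw2 hw1
    have hu := u_mem_polesLE_one hw1 hq1
    exact ⟨hq1, h.symm.p2_mem_polesLE_two hc hq2 hu, hq2, h.p2_mem_polesLE_two hc hq1 hu, hu⟩

end IsSasanoExpansion

/-- The Hamiltonian of the Sasano system as a polynomial expression in the parameters
`A = α0 + α1 + α3`, `a0`, `a1`, the independent variable `t` and the unknowns. -/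
def sasanoHamiltonian {K : Type*} [CommRing K] (A a0 a1 t q1 p1 q2 p2 : K) : K :=
  q1 ^ 2 * p1 ^ 2 - q1 ^ 2 * p1 + A * q1 * p1 - a0 * q1 - t * p1
    + q2 ^ 2 * p2 ^ 2 - q2 ^ 2 * p2 + A * q2 * p2 - a1 * q2 - t * p2
    + 4 * t * p1 * p2 + 2 * q1 * p1 * q2 * p2

lemma sasanoHamiltonian_swap {K : Type*} [CommRing K] (A a0 a1 t q1 p1 q2 p2 : K) :
    sasanoHamiltonian A a0 a1 t q1 p1 q2 p2 = sasanoHamiltonian A a1 a0 t q2 p2 q1 p1 := by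
  simp only [sasanoHamiltonian]
  ring

namespace IsSasanoExpansion

variable {k : Type*} [Field k]

local notation "𝒟" => LaurentSeries.derivative k

variable {A a0 a1 c : k} {q1 p1 q2 p2 u : k⸨X⸩}

lemma q1_coeff (h : IsSasanoExpansion A a0 a1 c q1 p1 q2 p2 u) (hq1 : q1 ∈ polesLE k 1)
    (hu : u ∈ polesLE k 1) (l : ℕ) :
    (l - 2) * q1.coeff (l - 2) + c * ((l - 1) * q1.coeff (l - 1)) =
      ∑ ij ∈ Finset.HasAntidiagonal.antidiagonal l,
        (u.coeff (ij.1 - 1) - q1.coeff (ij.1 - 1)) * q1.coeff (ij.2 - 1) -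
      (localTime c).coeff (l - 2) + 4 * (p2.coeff (l - 3) + c * p2.coeff (l - 2)) := by
  have hmul := coeff_mul_of_mem_polesLE (sub_mem hu hq1) hq1 l
  have hq1_eq : localTime c * 𝒟 q1 = (u - q1) * q1 - localTime c + 4 * (localTime c * p2) := by
    linear_combination h.q1_eq
  have hfour : (4 * (localTime c * p2)).coeff (l - (1 + 1) : ℤ) =
    4 * (localTime c * p2).coeff (l - (1 + 1) : ℤ) := laurentCoeff_ofNat_mul 4 _ _
  have hcoeff := congrArg (HahnSeries.coeff · (l - (1 + 1) : ℤ)) hq1_eq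
  simp only [coeff_localTime_mul_laurentDeriv, HahnSeries.coeff_add, HahnSeries.coeff_sub, hmul,
    hfour] at hcoeff
  rw [coeff_localTime_mul] at hcoeff
  push_cast at hcoeff
  ring_nf at hcoeff ⊢
  exact hcoeff

lemma p1_coeff (h : IsSasanoExpansion A a0 a1 c q1 p1 q2 p2 u) (hq1 : q1 ∈ polesLE k 1)
    (hp1 : p1 ∈ polesLE k 2) (hu : u ∈ polesLE k 1) (l : ℕ) :
    (l - 3) * p1.coeff (l - 3) + c * ((l - 2) * p1.coeff (l - 2)) =
      -∑ ij ∈ Finset.HasAntidiagonal.antidiagonal l,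
        p1.coeff (ij.1 - 2) * (u.coeff (ij.2 - 1) - 2 * q1.coeff (ij.2 - 1)) +
      (HahnSeries.C a0 : k⸨X⸩).coeff (l - 3) := by
  have hw1 : u - 2 * q1 ∈ polesLE k 1 := by
    rw [two_mul]
    exact sub_mem hu (add_mem hq1 hq1)
  have htwo (n : ℤ) : (2 * q1).coeff n = 2 * q1.coeff n := laurentCoeff_ofNat_mul 2 _ _
  have hmul := coeff_mul_of_mem_polesLE hp1 hw1 l
  have hcoeff := congrArg (HahnSeries.coeff · (l - (2 + 1) : ℤ)) h.p1_eq
  simp only [HahnSeries.coeff_add, HahnSeries.coeff_neg, HahnSeries.coeff_sub, hmul, htwo,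
    coeff_localTime_mul_laurentDeriv] at hcoeff
  push_cast at hcoeff
  ring_nf at hcoeff ⊢
  exact hcoeff

lemma isHalfJet (h : IsSasanoExpansion A a0 a1 c q1 p1 q2 p2 u)
    (hq1 : q1 ∈ polesLE k 1) (hp1 : p1 ∈ polesLE k 2) (hp2 : p2 ∈ polesLE k 2)
    (hu : u ∈ polesLE k 1) :
    IsHalfJet c (fun i => q1.coeff (i - 1)) (fun i => p1.coeff (i - 2))
      (fun i => p2.coeff (i - 2)) (fun i => u.coeff (i - 1)) := by
  have hq1' : q1.coeff (-2) = 0 := hq1 _ (by norm_num)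
  have hp1' : p1.coeff (-3) = 0 := hp1 _ (by norm_num)
  have hp2' : p2.coeff (-3) = 0 := hp2 _ (by norm_num)
  have hq (l : ℕ) := h.q1_coeff hq1 hu l
  have hp (l : ℕ) := h.p1_coeff hq1 hp1 hu l
  have hq_zero := hq 0
  have hq_one := hq 1
  have hq_two := hq 2
  have hp_zero := hp 0
  have hp_one := hp 1
  have hp_two := hp 2
  norm_num [Finset.Nat.antidiagonal_succ, localTime, hq1', hp1', hp2']
    at hq_zero hq_one hq_two hp_zero hp_one hp_two
  constructor <;> norm_num
  · linear_combination hq_zero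
  · linear_combination hq_one
  · linear_combination hq_two
  · linear_combination hp_zero
  · linear_combination -hp_one
  · linear_combination -hp_two

lemma laurentDeriv_hamiltonian (h : IsSasanoExpansion A a0 a1 c q1 p1 q2 p2 u) (hc : c ≠ 0) :
    𝒟 (sasanoHamiltonian (HahnSeries.C A) (HahnSeries.C a0) (HahnSeries.C a1) (localTime c)
      q1 p1 q2 p2) = 4 * (p1 * p2) - p1 - p2 := by
  refine mul_left_cancel₀ (ne_zero_of_notMem_polesLE (localTime_notMem_polesLE_neg_one hc)) ?_
  have htwo : 𝒟 (2 : k⸨X⸩) = 0 := laurentDeriv_ofNat 2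
  have hfour : 𝒟 (4 : k⸨X⸩) = 0 := laurentDeriv_ofNat 4
  obtain ⟨rfl, hq1, hp1, hq2, hp2⟩ := h
  simp only [sasanoHamiltonian, sq, map_add, map_sub, laurentDeriv_mul, laurentDeriv_C,
    laurentDeriv_localTime, htwo, hfour]
  linear_combination
    (2 * q1 * p1 ^ 2 - 2 * q1 * p1 + HahnSeries.C A * p1 - HahnSeries.C a0 + 2 * p1 * q2 * p2) * hq1
    + (2 * q2 * p2 ^ 2 - 2 * q2 * p2 + HahnSeries.C A * p2 - HahnSeries.C a1 + 2 * q1 * p1 * p2)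
      * hq2
    + (2 * q1 ^ 2 * p1 - q1 ^ 2 + HahnSeries.C A * q1 - localTime c + 4 * localTime c * p2
      + 2 * q1 * q2 * p2) * hp1
    + (2 * q2 ^ 2 * p2 - q2 ^ 2 + HahnSeries.C A * q2 - localTime c + 4 * localTime c * p1
      + 2 * q1 * p1 * q2) * hp2

variable [CharZero k]

lemma isSasanoJet (h : IsSasanoExpansion A a0 a1 c q1 p1 q2 p2 u)
    (hq1 : q1 ∈ polesLE k 1) (hp1 : p1 ∈ polesLE k 2) (hq2 : q2 ∈ polesLE k 1)
    (hp2 : p2 ∈ polesLE k 2) (hu : u ∈ polesLE k 1) :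
    IsSasanoJet c (fun i => q1.coeff (i - 1)) (fun i => p1.coeff (i - 2))
      (fun i => q2.coeff (i - 1)) (fun i => p2.coeff (i - 2)) (fun i => u.coeff (i - 1)) := by
  have hu_coeff (l : ℕ) : u.coeff (l - (1 + 2)) =
      2 * (∑ ij ∈ Finset.HasAntidiagonal.antidiagonal l, q1.coeff (ij.1 - 1) * p1.coeff (ij.2 - 2) +
        ∑ ij ∈ Finset.HasAntidiagonal.antidiagonal l, q2.coeff (ij.1 - 1) * p2.coeff (ij.2 - 2)) +
      (HahnSeries.C A : k⸨X⸩).coeff (l - (1 + 2)) := by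
    rw [← coeff_mul_of_mem_polesLE hq1 hp1, ← coeff_mul_of_mem_polesLE hq2 hp2,
      ← HahnSeries.coeff_add, ← laurentCoeff_ofNat_mul, ← HahnSeries.coeff_add]
    exact congrArg (HahnSeries.coeff · _) h.u_eq
  have hu_zero := hu_coeff 0
  have hu_one := hu_coeff 1
  have hu_two := hu_coeff 2
  norm_num [Finset.Nat.antidiagonal_succ, hu (-3) (by norm_num), hu (-2) (by norm_num)]
    at hu_zero hu_one hu_two
  refine ⟨h.isHalfJet hq1 hp1 hp2 hu, h.symm.isHalfJet hq2 hp2 hp1 hu, ?_, ?_, ?_⟩ <;> norm_num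
  · linear_combination hu_zero
  · linear_combination hu_one
  · linear_combination hu_two

lemma quadratic_add_single_mem (hp1 : p1 ∈ polesLE k 2) (hp2 : p2 ∈ polesLE k 2)
    (h : HasQuantizedResidue c (fun i => p1.coeff (i - 2)) (fun i => p2.coeff (i - 2))) :
    ∃ n : ℤ, 4 * (p1 * p2) - p1 - p2 + HahnSeries.single (-2) (n * c / 4) ∈ polesLE k 1 := by
  obtain ⟨h4, h3, n, h2⟩ := h
  have hmul_zero := coeff_mul_of_mem_polesLE hp1 hp2 0
  have hmul_one := coeff_mul_of_mem_polesLE hp1 hp2 1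
  have hmul_two := coeff_mul_of_mem_polesLE hp1 hp2 2
  norm_num [-mul_eq_zero, Finset.Nat.antidiagonal_succ] at h4 h3 h2 hmul_zero hmul_one hmul_two
  have hfour (m : ℤ) : (4 * (p1 * p2)).coeff m = 4 * (p1 * p2).coeff m :=
    laurentCoeff_ofNat_mul 4 _ m
  refine ⟨n, fun m hm => ?_⟩
  rw [HahnSeries.coeff_add, HahnSeries.coeff_sub, HahnSeries.coeff_sub, hfour]
  obtain hm | rfl | rfl | rfl : m < -4 ∨ m = -4 ∨ m = -3 ∨ m = -2 := by omega
  · rw [mul_mem_polesLE hp1 hp2 m (by omega), hp1 m (by omega), hp2 m (by omega),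
      HahnSeries.coeff_single_of_ne (by omega)]
    simp
  · rw [hmul_zero, hp1 (-4) (by norm_num), hp2 (-4) (by norm_num),
      HahnSeries.coeff_single_of_ne (by omega)]
    linear_combination 4 * h4
  · rw [hmul_one, hp1 (-3) (by norm_num), hp2 (-3) (by norm_num),
      HahnSeries.coeff_single_of_ne (by omega)]
    linear_combination 4 * h3
  · rw [hmul_two, HahnSeries.coeff_single_same]
    linear_combination h2 / 4

lemma exists_hamiltonian_sub_single_mem_of_singular
    (h : IsSasanoExpansion A a0 a1 c q1 p1 q2 p2 u) (hc : c ≠ 0) (hp1 : p1 ∉ polesLE k 0) :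
    ∃ n : ℤ, sasanoHamiltonian (HahnSeries.C A) (HahnSeries.C a0) (HahnSeries.C a1) (localTime c)
      q1 p1 q2 p2 - HahnSeries.single (-1) (n * c / 4) ∈ polesLE k 0 := by
  obtain ⟨hq1, hp1, hq2, hp2, hu⟩ := h.polesLE_of_singular hc hp1
  have hjet := h.isSasanoJet hq1 hp1 hq2 hp2 hu
  obtain ⟨n, hn⟩ := quadratic_add_single_mem hp1 hp2 (hjet.hasQuantizedResidue hc)
  refine ⟨n, mem_polesLE_zero_of_laurentDeriv_mem ?_⟩
  rw [map_sub, h.laurentDeriv_hamiltonian hc, laurentDeriv_single]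
  simpa using hn

theorem exists_hamiltonian_sub_single_mem (h : IsSasanoExpansion A a0 a1 c q1 p1 q2 p2 u)
    (hc : c ≠ 0) :
    ∃ n : ℤ, sasanoHamiltonian (HahnSeries.C A) (HahnSeries.C a0) (HahnSeries.C a1) (localTime c)
      q1 p1 q2 p2 - HahnSeries.single (-1) (n * c / 4) ∈ polesLE k 0 := by
  by_cases hp1 : p1 ∈ polesLE k 0
  swap
  · exact h.exists_hamiltonian_sub_single_mem_of_singular hc hp1
  by_cases hp2 : p2 ∈ polesLE k 0
  swap
  · rw [sasanoHamiltonian_swap]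
    exact h.symm.exists_hamiltonian_sub_single_mem_of_singular hc hp2
  refine ⟨0, mem_polesLE_zero_of_laurentDeriv_mem (polesLE_mono zero_le_one ?_)⟩
  simp only [Int.cast_zero, zero_mul, zero_div, map_zero, sub_zero]
  rw [h.laurentDeriv_hamiltonian hc]
  have hp1p2 : p1 * p2 ∈ polesLE k 0 := by simpa using mul_mem_polesLE hp1 hp2
  exact sub_mem (sub_mem ((ofNat_mul_mem_polesLE_iff 4).mpr hp1p2) hp1) hp2

end IsSasanoExpansion

section LaurentExpansion

variable {k : Type*} [Field k]

local notation "𝒟" => LaurentSeries.derivative k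

lemma coe_taylor_injective (c : k) :
    Function.Injective
      (((HahnSeries.ofPowerSeries ℤ k).comp Polynomial.coeToPowerSeries.ringHom).comp
        (Polynomial.taylorAlgHom c : k[X] →+* k[X])) :=
  HahnSeries.ofPowerSeries_injective.comp
    ((Polynomial.coe_injective k).comp (Polynomial.taylor_injective c))

/-- The Laurent expansion of a rational function at `c`, as a series in `X - c`. -/
noncomputable def laurentExpansion (c : k) : RatFunc k →+* k⸨X⸩ :=
  RatFunc.liftRingHom _ (nonZeroDivisors_le_comap_nonZeroDivisors_of_injective _
    (coe_taylor_injective c))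

lemma laurentExpansion_algebraMap (c : k) (p : k[X]) :
    laurentExpansion c (algebraMap k[X] (RatFunc k) p) =
      ((Polynomial.taylor c p : k⟦X⟧) : k⸨X⸩) :=
  RatFunc.liftRingHom_algebraMap _ _ _

lemma laurentExpansion_C (c a : k) : laurentExpansion c (RatFunc.C a) = HahnSeries.C a := by
  rw [← RatFunc.algebraMap_C, laurentExpansion_algebraMap]
  simp

lemma laurentExpansion_X (c : k) : laurentExpansion c RatFunc.X = localTime c := by
  rw [← RatFunc.algebraMap_X, laurentExpansion_algebraMap]
  simp [localTime]

lemma laurentExpansion_div_X_sub_C (a c : k) :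
    laurentExpansion c (RatFunc.C a / (RatFunc.X - RatFunc.C c)) = HahnSeries.single (-1) a := by
  have hX : (HahnSeries.single 1 1 : k⸨X⸩) ≠ 0 := HahnSeries.single_ne_zero one_ne_zero
  rw [map_div₀, map_sub, laurentExpansion_C, laurentExpansion_C, laurentExpansion_X, localTime,
    add_sub_cancel_right, div_eq_iff hX, HahnSeries.single_mul_single, neg_add_cancel, mul_one]
  rfl

/-- The derivative of a rational function, computed by the quotient rule from its reduced
fraction. -/
noncomputable def ratFuncDeriv (f : RatFunc k) : RatFunc k :=
  algebraMap k[X] _ (f.num.derivative * f.denom - f.num * f.denom.derivative) /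
    algebraMap k[X] _ (f.denom ^ 2)

lemma laurentDeriv_laurentExpansion_algebraMap (c : k) (p : k[X]) :
    𝒟 (laurentExpansion c (algebraMap k[X] _ p)) =
      laurentExpansion c (algebraMap k[X] _ p.derivative) := by
  have htaylor : (Polynomial.taylor c p).derivative = Polynomial.taylor c p.derivative := by
    simp [Polynomial.taylor_apply, Polynomial.derivative_comp]
  rw [laurentExpansion_algebraMap, laurentExpansion_algebraMap, laurentDeriv_coe,
    PowerSeries.derivative_coe, htaylor]

lemma laurentExpansion_mul_denom (c : k) (f : RatFunc k) :
    laurentExpansion c f * laurentExpansion c (algebraMap k[X] _ f.denom) =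
      laurentExpansion c (algebraMap k[X] _ f.num) := by
  have hd := RatFunc.algebraMap_ne_zero f.denom_ne_zero
  rw [← map_mul, ← (div_eq_iff hd).mp f.num_div_denom]

lemma laurentDeriv_laurentExpansion (c : k) (f : RatFunc k) :
    𝒟 (laurentExpansion c f) = laurentExpansion c (ratFuncDeriv f) := by
  have hd : laurentExpansion c (algebraMap k[X] _ f.denom) ≠ 0 := by
    simpa using f.denom_ne_zero
  have hfrac := laurentExpansion_mul_denom c f
  have hderiv := congrArg 𝒟 hfrac
  rw [laurentDeriv_mul, laurentDeriv_laurentExpansion_algebraMap,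
    laurentDeriv_laurentExpansion_algebraMap] at hderiv
  rw [ratFuncDeriv, map_div₀, map_pow, map_pow, eq_div_iff (pow_ne_zero 2 hd)]
  simp only [map_sub, map_mul]
  linear_combination laurentExpansion c (algebraMap k[X] _ f.denom) * hderiv -
    laurentExpansion c (algebraMap k[X] _ f.denom.derivative) * hfrac

end LaurentExpansion

section Evaluation

lemma noPoleAt_of_laurentExpansion_mem {f : RatFunc ℂ} {c : ℂ}
    (hf : laurentExpansion c f ∈ polesLE ℂ 0) : NoPoleAt f c := by
  intro hd
  obtain ⟨F, hF, -⟩ := exists_eq_single_mul_coe hf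
  have hfrac : F * Polynomial.taylor c f.denom = Polynomial.taylor c f.num := by
    have := laurentExpansion_mul_denom c f
    rw [laurentExpansion_algebraMap, laurentExpansion_algebraMap, hF, neg_zero,
      HahnSeries.single_zero_one, one_mul, ← PowerSeries.coe_mul] at this
    exact HahnSeries.ofPowerSeries_injective this
  have hn : f.num.eval c = 0 := by
    simpa [hd] using (congrArg PowerSeries.constantCoeff hfrac).symm
  obtain ⟨a, b, hab⟩ := f.isCoprime_num_denom
  simpa [hn, hd] using congrArg (Polynomial.eval c) hab

lemma eventually_noPoleAt (f : RatFunc ℂ) : ∀ᶠ t in cofinite, NoPoleAt f t := by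
  refine (f.denom.roots.toFinset.finite_toSet.subset fun t ht => ?_)
  simpa [NoPoleAt, f.denom_ne_zero] using ht

lemma evR_div (a : ℂ[X]) {b : ℂ[X]} {t : ℂ} (hb : b.eval t ≠ 0) :
    evR (algebraMap ℂ[X] _ a / algebraMap ℂ[X] _ b) t = a.eval t / b.eval t := by
  have hb0 : b ≠ 0 := by
    rintro rfl
    exact hb Polynomial.eval_zero
  have hd : (RatFunc.denom (algebraMap ℂ[X] _ a / algebraMap ℂ[X] _ b)).eval t ≠ 0 := fun h =>
    hb (Polynomial.eval_eq_zero_of_dvd_of_eval_eq_zero (RatFunc.denom_div_dvd a b) h)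
  have hfrac := congrArg (Polynomial.eval t)
    ((RatFunc.num_mul_eq_mul_denom_iff hb0).mpr (rfl : algebraMap _ _ a / _ = _))
  rw [Polynomial.eval_mul, Polynomial.eval_mul] at hfrac
  rw [evR, div_eq_div_iff hd hb, hfrac]

lemma deriv_evR {f : RatFunc ℂ} {t : ℂ} (h : NoPoleAt f t) :
    deriv (evR f) t = evR (ratFuncDeriv f) t := by
  have hderiv : deriv (evR f) t = _ := ((f.num.hasDerivAt t).div (f.denom.hasDerivAt t) h).deriv
  rw [hderiv, ratFuncDeriv, evR_div _ (by simpa [NoPoleAt] using h)]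
  simp

/-- A rational function as a germ along the cofinite filter, that is, its values up to finitely
many points; only there are the junk values of `evR` at poles harmless. -/
noncomputable def evalGerm : RatFunc ℂ →+* Germ (cofinite : Filter ℂ) ℂ where
  toFun f := evR f
  map_one' := Germ.coe_eq.mpr (.of_forall fun _ => RatFunc.eval_one _ _)
  map_zero' := Germ.coe_eq.mpr (.of_forall fun _ => RatFunc.eval_zero _ _)
  map_mul' f g := Germ.coe_eq.mpr <| by
    filter_upwards [eventually_noPoleAt f, eventually_noPoleAt g] with t hf hg
    exact RatFunc.eval_mul _ _ hf hg
  map_add' f g := Germ.coe_eq.mpr <| by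
    filter_upwards [eventually_noPoleAt f, eventually_noPoleAt g] with t hf hg
    exact RatFunc.eval_add _ _ hf hg

lemma evalGerm_C (a : ℂ) : evalGerm (RatFunc.C a) = ((fun _ => a : ℂ → ℂ) : Germ cofinite ℂ) :=
  Germ.coe_eq.mpr (.of_forall fun _ => RatFunc.eval_C _ _)

lemma evalGerm_X : evalGerm RatFunc.X = ((fun t => t : ℂ → ℂ) : Germ cofinite ℂ) :=
  Germ.coe_eq.mpr (.of_forall fun _ => RatFunc.eval_X _ _)

end Evaluation

section Solution

variable {a0 a1 a3 : ℂ} {q1 p1 q2 p2 : RatFunc ℂ}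

namespace IsSasanoSol

lemma symm (h : IsSasanoSol a0 a1 a3 q1 p1 q2 p2) : IsSasanoSol a1 a0 a3 q2 p2 q1 p1 := by
  intro t hq2 hp2 hq1 hp1
  obtain ⟨hq1', hp1', hq2', hp2'⟩ := h t hq1 hp1 hq2 hp2
  exact ⟨by linear_combination hq2', by linear_combination hp2', by linear_combination hq1',
    by linear_combination hp1'⟩

lemma q1_eq (h : IsSasanoSol a0 a1 a3 q1 p1 q2 p2) :
    RatFunc.X * ratFuncDeriv q1 = 2 * q1 ^ 2 * p1 - q1 ^ 2 + RatFunc.C (a0 + a1 + a3) * q1 -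
      RatFunc.X + 4 * RatFunc.X * p2 + 2 * q1 * q2 * p2 := by
  apply evalGerm.injective
  simp only [map_mul, map_add, map_sub, map_pow, map_ofNat, evalGerm_X, evalGerm_C]
  refine Germ.coe_eq.mpr ?_
  filter_upwards [eventually_noPoleAt q1, eventually_noPoleAt p1, eventually_noPoleAt q2,
    eventually_noPoleAt p2] with t hq1 hp1 hq2 hp2
  have := (h t hq1 hp1 hq2 hp2).1
  rw [deriv_evR hq1] at this
  exact this

lemma p1_eq (h : IsSasanoSol a0 a1 a3 q1 p1 q2 p2) :
    RatFunc.X * ratFuncDeriv p1 = -2 * q1 * p1 ^ 2 + 2 * q1 * p1 - RatFunc.C (a0 + a1 + a3) * p1 +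
      RatFunc.C a0 - 2 * p1 * q2 * p2 := by
  apply evalGerm.injective
  simp only [map_mul, map_add, map_sub, map_neg, map_pow, map_ofNat, evalGerm_X, evalGerm_C]
  refine Germ.coe_eq.mpr ?_
  filter_upwards [eventually_noPoleAt q1, eventually_noPoleAt p1, eventually_noPoleAt q2,
    eventually_noPoleAt p2] with t hq1 hp1 hq2 hp2
  have := (h t hq1 hp1 hq2 hp2).2.1
  rw [deriv_evR hp1] at this
  exact this

lemma isSasanoExpansion (h : IsSasanoSol a0 a1 a3 q1 p1 q2 p2) (c : ℂ) :
    IsSasanoExpansion (a0 + a1 + a3) a0 a1 c (laurentExpansion c q1) (laurentExpansion c p1)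
      (laurentExpansion c q2) (laurentExpansion c p2)
      (laurentExpansion c (2 * (q1 * p1 + q2 * p2) + RatFunc.C (a0 + a1 + a3))) := by
  have hq1 := congrArg (laurentExpansion c) h.q1_eq
  have hp1 := congrArg (laurentExpansion c) h.p1_eq
  have hq2 := congrArg (laurentExpansion c) h.symm.q1_eq
  have hp2 := congrArg (laurentExpansion c) h.symm.p1_eq
  rw [add_comm a1 a0] at hq2 hp2
  simp only [map_mul, map_add, map_sub, map_neg, map_pow, map_ofNat, laurentExpansion_X,
    laurentExpansion_C, ← laurentDeriv_laurentExpansion] at hq1 hp1 hq2 hp2 ⊢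
  exact ⟨by simp only [map_add], by linear_combination hq1, by linear_combination hp1,
    by linear_combination hq2, by linear_combination hp2⟩

end IsSasanoSol

lemma laurentExpansion_sasanoH (a0 a1 a3 c : ℂ) (q1 p1 q2 p2 : RatFunc ℂ) :
    laurentExpansion c (sasanoH a0 a1 a3 q1 p1 q2 p2) =
      sasanoHamiltonian (HahnSeries.C (a0 + a1 + a3)) (HahnSeries.C a0) (HahnSeries.C a1)
        (localTime c) (laurentExpansion c q1) (laurentExpansion c p1) (laurentExpansion c q2)
        (laurentExpansion c p2) := by
  simp only [sasanoH, sasanoHamiltonian, map_mul, map_add, map_sub, map_pow, map_ofNat,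
    laurentExpansion_X, laurentExpansion_C]

end Solution

theorem sasano_hamiltonian_residue_at_c (a0 a1 a2 a3 : ℂ)
    (hpar : a0 + a1 + 2 * a2 + a3 = 1 / 2)
    (q1 p1 q2 p2 : RatFunc ℂ)
    (hsol : IsSasanoSol a0 a1 a3 q1 p1 q2 p2)
    (c : ℂ) (hc : c ≠ 0) :
    ∃ n : ℤ,
      NoPoleAt (sasanoH a0 a1 a3 q1 p1 q2 p2
        - RatFunc.C ((n : ℂ) * c / 4) / (RatFunc.X - RatFunc.C c)) c := by
  obtain ⟨n, hn⟩ := (hsol.isSasanoExpansion c).exists_hamiltonian_sub_single_mem hc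
  refine ⟨n, noPoleAt_of_laurentExpansion_mem ?_⟩
  rwa [map_sub, laurentExpansion_sasanoH, laurentExpansion_div_X_sub_C]
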